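/- Let s ≥ 5 and set B(x) = 1 + 3x/(2Q) − 1/(2Q). Then the function c ↦ OPT(1, B(1/c), c, s) is strictly decreasing on c ≥ 3. -/

import Mathlib

/-- `q(x) = exp(x) - x - 1`. -/
noncomputable def q (x : ℝ) : ℝ := Real.exp x - x - 1

/-- `Q(x) = x·(exp(x) − 1)/(exp(x) − x − 1)`. -/
noncomputable def Qf (x : ℝ) : ℝ := x * (Real.exp x - 1) / (Real.exp x - x - 1)

/-- `OPT(x,y,z,s)` for the domain-size-4 case, with `Q = Q(s)`. -/
noncomputable def OPTL (x y z s : ℝ) : ℝ :=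
  (3 * q (s*x) / q s + q (s*y) / q s) * (1/(y + x*z)) ^ (Qf s) *
  ((1+z) ^ (Qf s) + 3 * |1 - z/3| ^ (Qf s))

/-!
At the parameters of the theorem, `OPT = (3 + v) * ((1 + c) / (B + c)) ^ Q * (1 + 3 * r ^ Q)`, where
`v = q (s * B) / q s`, `B = B(1 / c)` and `r = (c - 3) / (3 * (1 + c))`, so its logarithm is a sum
of three terms. Since `Q` is the logarithmic derivative of `y ↦ q (s * y)` at `y = 1`, the factor
`1 / Q` in the slope of `B` cancels, and convexity of `exp` bounds the derivative of the first term
by `-(3 / (2 * c ^ 2)) * ((c + 3) / (7 * c + 3))`. The derivative of the second term is explicit and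
that of the third is at most `16 * r ^ 3 / (1 + c) ^ 2` once `4 ≤ Q`. After multiplication by
`2 * c ^ 2` the sum of the three bounds is a rational function of `c`, negative for `c > 3`.
-/

section Growth

variable {s y : ℝ}

lemma q_pos {x : ℝ} (hx : x ≠ 0) : 0 < q x := by
  have := Real.add_one_lt_exp hx
  unfold q
  linarith

lemma hasDerivAt_q (x : ℝ) : HasDerivAt q (Real.exp x - 1) x :=
  ((Real.hasDerivAt_exp x).sub (hasDerivAt_id x)).sub_const 1

lemma exp_sub_one_pos (hs : 0 < s) : 0 < Real.exp s - 1 :=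
  sub_pos.2 (Real.one_lt_exp_iff.2 hs)

lemma Qf_mul_q (hs : s ≠ 0) : Qf s * q s = s * (Real.exp s - 1) :=
  div_mul_cancel₀ _ (q_pos hs).ne'

lemma lt_Qf (hs : 0 < s) : s < Qf s := by
  refine lt_of_mul_lt_mul_right ?_ (q_pos hs.ne').le
  rw [Qf_mul_q hs.ne', q]
  gcongr
  linarith

/-- The function `y ↦ q (s * y)` normalized to take the value `1` at `y = 1`. -/
noncomputable def qRatio (s y : ℝ) : ℝ := q (s * y) / q s

/-- The derivative of `q` at `s * y`, normalized to take the value `1` at `y = 1`. -/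
noncomputable def expRatio (s y : ℝ) : ℝ := (Real.exp (s * y) - 1) / (Real.exp s - 1)

lemma qRatio_pos (hs : s ≠ 0) (hy : y ≠ 0) : 0 < qRatio s y :=
  div_pos (q_pos (mul_ne_zero hs hy)) (q_pos hs)

lemma hasDerivAt_qRatio (hs : 0 < s) (y : ℝ) :
    HasDerivAt (qRatio s) (Qf s * expRatio s y) y := by
  have hderiv := ((hasDerivAt_q (s * y)).comp y ((hasDerivAt_id y).const_mul s)).div_const (q s)
  refine hderiv.congr_deriv ?_
  have hq := (q_pos hs.ne').ne'
  have hexp := (exp_sub_one_pos hs).ne'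
  rw [expRatio, eq_div_of_mul_eq hq (Qf_mul_q hs.ne')]
  field_simp

lemma qRatio_le_expRatio (hs : 0 < s) (hy₀ : 0 ≤ y) (hy₁ : y ≤ 1) :
    qRatio s y ≤ expRatio s y := by
  have hconv : Real.exp (s * y) ≤ 1 - y + y * Real.exp s := by
    simpa [mul_comm] using convexOn_exp.2 (Set.mem_univ 0) (Set.mem_univ s)
      (sub_nonneg.2 hy₁) hy₀ (sub_add_cancel 1 y)
  rw [qRatio, expRatio, div_le_div_iff₀ (q_pos hs.ne') (exp_sub_one_pos hs), q, q]
  linear_combination s * hconv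

lemma mul_exp_div_le_Qf (hs : 0 < s) : s * Real.exp s / (Real.exp s - 1) ≤ Qf s := by
  have hexp : (1 - s) * Real.exp s ≤ 1 := by
    calc (1 - s) * Real.exp s ≤ Real.exp (-s) * Real.exp s := by
          gcongr
          exact Real.one_sub_le_exp_neg s
      _ = 1 := by rw [← Real.exp_add, neg_add_cancel, Real.exp_zero]
  rw [eq_div_of_mul_eq (q_pos hs.ne').ne' (Qf_mul_q hs.ne'),
    div_le_div_iff₀ (exp_sub_one_pos hs) (q_pos hs.ne'), q]
  linear_combination s * hexp

-- The tangent to `expRatio s` at `1` has slope `s * exp s / (exp s - 1) ≤ Qf s`.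
lemma one_sub_Qf_mul_le_expRatio (hs : 0 < s) (hy : y ≤ 1) :
    1 - Qf s * (1 - y) ≤ expRatio s y := by
  have hE := exp_sub_one_pos hs
  have htangent : Real.exp s * (1 - s * (1 - y)) ≤ Real.exp (s * y) := by
    calc Real.exp s * (1 - s * (1 - y)) ≤ Real.exp s * Real.exp (-(s * (1 - y))) := by
          gcongr
          exact Real.one_sub_le_exp_neg _
      _ = Real.exp (s * y) := by rw [← Real.exp_add]; ring_nf
  calc 1 - Qf s * (1 - y) ≤ 1 - s * Real.exp s / (Real.exp s - 1) * (1 - y) := by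
        gcongr
        exact mul_exp_div_le_Qf hs
    _ = (Real.exp s * (1 - s * (1 - y)) - 1) / (Real.exp s - 1) := by field_simp; ring
    _ ≤ expRatio s y := by rw [expRatio]; gcongr

end Growth

section Slope

variable {Q c : ℝ}

/-- The function `B(x) = 1 + 3x/(2Q) - 1/(2Q)` of the theorem, with `Q` as an explicit argument. -/
noncomputable def optB (Q x : ℝ) : ℝ := 1 + 3 * x / (2 * Q) - 1 / (2 * Q)

lemma mul_one_sub_optB (hQ : Q ≠ 0) (hc : c ≠ 0) :
    Q * (1 - optB Q (1 / c)) = (c - 3) / (2 * c) := by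
  unfold optB
  field_simp
  ring

lemma optB_le_one (hQ : 0 < Q) (hc : 3 ≤ c) : optB Q (1 / c) ≤ 1 := by
  have hnonneg : 0 ≤ Q * (1 - optB Q (1 / c)) := by
    rw [mul_one_sub_optB hQ.ne' (by positivity)]
    exact div_nonneg (by linarith) (by positivity)
  linarith [nonneg_of_mul_nonneg_right hnonneg hQ]

lemma optB_pos (hQ : 1 / 2 < Q) (hc : 0 < c) : 0 < optB Q (1 / c) := by
  have : 0 < Q := by linarith
  have hfrac : 1 / (2 * Q) < 1 := by rw [div_lt_one (by positivity)]; linarith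
  have hinv : 0 < 3 * (1 / c) / (2 * Q) := by positivity
  unfold optB
  linarith

lemma four_le_optB_add (hQ : 1 / 2 < Q) (hc : 3 ≤ c) : 4 ≤ optB Q (1 / c) + c := by
  have : 0 < Q := by linarith
  have hcoef : 0 ≤ 1 - 1 / (2 * Q * c) := by
    rw [sub_nonneg, div_le_one (by positivity)]
    nlinarith
  have hfactor : optB Q (1 / c) + c - 4 = (c - 3) * (1 - 1 / (2 * Q * c)) := by
    unfold optB
    field_simp
    ring
  linarith [mul_nonneg (sub_nonneg.2 hc) hcoef]

lemma hasDerivAt_optB (Q : ℝ) (hc : c ≠ 0) :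
    HasDerivAt (fun c => optB Q (1 / c)) (-(3 / (2 * Q * c ^ 2))) c := by
  simp only [optB, one_div]
  refine ((((hasDerivAt_inv hc).const_mul 3).div_const (2 * Q)).const_add 1).sub_const _
    |>.congr_deriv ?_
  ring

end Slope

section LogDerivatives

variable {s Q c : ℝ}

lemma hasDerivAt_log_three_add_qRatio (hs : 0 < s) (hQ : 1 / 2 < Qf s) (hc : 0 < c) :
    HasDerivAt (fun c => Real.log (3 + qRatio s (optB (Qf s) (1 / c))))
      (-(3 / (2 * c ^ 2)) * (expRatio s (optB (Qf s) (1 / c)) /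
        (3 + qRatio s (optB (Qf s) (1 / c))))) c := by
  have hv := qRatio_pos hs.ne' (optB_pos hQ hc).ne'
  have hQ₀ : Qf s ≠ 0 := by linarith
  refine ((((hasDerivAt_qRatio hs _).comp c (hasDerivAt_optB (Qf s) hc.ne')).const_add 3).log
    (by simp only [Function.comp_apply]; positivity)).congr_deriv ?_
  simp only [Function.comp_apply]
  field_simp

lemma le_expRatio_div_three_add_qRatio (hs : 0 < s) (hQ : 1 / 2 < Qf s) (hc : 3 ≤ c) :
    (c + 3) / (7 * c + 3) ≤
      expRatio s (optB (Qf s) (1 / c)) / (3 + qRatio s (optB (Qf s) (1 / c))) := by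
  have hc₀ : 0 < c := by linarith
  have hB₀ := optB_pos hQ hc₀
  have hB₁ := optB_le_one (by linarith : 0 < Qf s) hc
  have hv₀ := qRatio_pos hs.ne' hB₀.ne'
  have hvu := qRatio_le_expRatio hs hB₀.le hB₁
  have hu : (c + 3) / (2 * c) ≤ expRatio s (optB (Qf s) (1 / c)) := by
    calc (c + 3) / (2 * c) = 1 - Qf s * (1 - optB (Qf s) (1 / c)) := by
          rw [mul_one_sub_optB (by linarith) hc₀.ne']
          field_simp
          ring
      _ ≤ _ := one_sub_Qf_mul_le_expRatio hs hB₁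
  rw [div_le_iff₀ (by positivity)] at hu
  rw [div_le_div_iff₀ (by positivity) (by positivity)]
  nlinarith

lemma hasDerivAt_mul_log_sub_log (hQ : 1 / 2 < Q) (hc : 0 < c) :
    HasDerivAt (fun c => Q * (Real.log (1 + c) - Real.log (optB Q (1 / c) + c)))
      (-((c - 3) ^ 2 - 12) / (2 * c ^ 2 * (1 + c) * (optB Q (1 / c) + c))) c := by
  have hB := optB_pos hQ hc
  have hQ₀ : Q ≠ 0 := by linarith
  have hlog := ((hasDerivAt_id c).const_add 1).log (by simp only [id]; positivity)
  have hlogB := ((hasDerivAt_optB Q hc.ne').add (hasDerivAt_id c)).log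
    (by simp only [Pi.add_apply, id]; positivity)
  refine ((hlog.sub hlogB).const_mul Q).congr_deriv ?_
  have hdefect := mul_one_sub_optB hQ₀ hc.ne'
  rw [eq_div_iff (by positivity)] at hdefect
  simp only [Pi.add_apply, id]
  have hBc : optB Q (1 / c) + c ≠ 0 := by positivity
  generalize optB Q (1 / c) = b at *
  field_simp
  linear_combination -c * hdefect

lemma neg_sq_sub_div_le (hQ : 1 / 2 < Q) (hc : 3 ≤ c) :
    -((c - 3) ^ 2 - 12) / (2 * c ^ 2 * (1 + c) * (optB Q (1 / c) + c)) ≤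
      1 / (2 * c ^ 2) * (3 / (1 + c) - ((c - 3) / (1 + c)) ^ 2) := by
  have hlower := four_le_optB_add hQ hc
  have hupper := optB_le_one (by linarith : 0 < Q) hc
  have hsq : ((c - 3) / (1 + c)) ^ 2 ≤ (c - 3) ^ 2 / ((1 + c) * (optB Q (1 / c) + c)) := by
    rw [div_pow, sq (1 + c)]
    gcongr
  have hconst : 12 / ((1 + c) * (optB Q (1 / c) + c)) ≤ 3 / (1 + c) := by
    rw [div_le_div_iff₀ (by positivity) (by positivity)]
    nlinarith
  calc _ = 1 / (2 * c ^ 2) * (12 / ((1 + c) * (optB Q (1 / c) + c)) -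
        (c - 3) ^ 2 / ((1 + c) * (optB Q (1 / c) + c))) := by field_simp; ring
    _ ≤ _ := by gcongr

/-- The quotient of `|1 - c / 3|` by `1 + c`, for `3 ≤ c`: factoring `(1 + c) ^ Q` out of the last
factor of `OPT` leaves `1 + 3 * tailRatio c ^ Q`. -/
noncomputable def tailRatio (c : ℝ) : ℝ := (c - 3) / (3 * (1 + c))

lemma tailRatio_nonneg (hc : 3 ≤ c) : 0 ≤ tailRatio c :=
  div_nonneg (by linarith) (by linarith)

lemma tailRatio_pos (hc : 3 < c) : 0 < tailRatio c :=
  div_pos (by linarith) (by linarith)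

lemma tailRatio_lt_one_third (hc : -1 < c) : tailRatio c < 1 / 3 := by
  rw [tailRatio, div_lt_div_iff₀ (by linarith) (by norm_num)]
  linarith

lemma hasDerivAt_tailRatio (hc : 1 + c ≠ 0) :
    HasDerivAt tailRatio (4 / (3 * (1 + c) ^ 2)) c := by
  refine (((hasDerivAt_id c).sub_const 3).div (((hasDerivAt_id c).const_add 1).const_mul 3)
    (mul_ne_zero three_ne_zero hc)).congr_deriv ?_
  simp only [id]
  field_simp
  ring

lemma hasDerivAt_log_one_add_tailRatio_rpow (hQ : 1 ≤ Q) (hc : 3 ≤ c) :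
    HasDerivAt (fun c => Real.log (1 + 3 * tailRatio c ^ Q))
      (4 * (Q * tailRatio c ^ (Q - 1)) / ((1 + c) ^ 2 * (1 + 3 * tailRatio c ^ Q))) c := by
  have hc₁ : 1 + c ≠ 0 := by linarith
  have hr := tailRatio_nonneg hc
  have hpos : 1 + 3 * tailRatio c ^ Q ≠ 0 := by positivity
  refine (((((hasDerivAt_tailRatio hc₁).rpow_const (.inr hQ)).const_mul 3).const_add 1).log
    hpos).congr_deriv ?_
  field_simp

-- `p ↦ p * x ^ (p - 1)` peaks at `p = -1 / log x`, which the bound on `x` places at or below `a`.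
lemma mul_rpow_sub_one_le {a p x : ℝ} (ha : 0 < a) (hap : a ≤ p) (hx₀ : 0 < x)
    (hx : x ≤ Real.exp (-a⁻¹)) : p * x ^ (p - 1) ≤ a * x ^ (a - 1) := by
  have hpow : x ^ (p - a) ≤ Real.exp (-((p - a) / a)) := by
    calc x ^ (p - a) ≤ Real.exp (-a⁻¹) ^ (p - a) :=
          Real.rpow_le_rpow hx₀.le hx (sub_nonneg.2 hap)
      _ = Real.exp (-((p - a) / a)) := by rw [← Real.exp_mul]; ring_nf
  have hp : p ≤ a * Real.exp ((p - a) / a) := by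
    calc p = a * ((p - a) / a + 1) := by field_simp; ring
      _ ≤ _ := by gcongr; exact Real.add_one_le_exp _
  calc p * x ^ (p - 1) = p * x ^ (p - a) * x ^ (a - 1) := by
        rw [mul_assoc, ← Real.rpow_add hx₀]; ring_nf
    _ ≤ a * Real.exp ((p - a) / a) * Real.exp (-((p - a) / a)) * x ^ (a - 1) := by gcongr
    _ = a * x ^ (a - 1) := by rw [mul_assoc a, ← Real.exp_add, add_neg_cancel, Real.exp_zero,
        mul_one]

lemma tailRatio_logDeriv_le (hQ : 4 ≤ Q) (hc : 3 < c) :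
    4 * (Q * tailRatio c ^ (Q - 1)) / ((1 + c) ^ 2 * (1 + 3 * tailRatio c ^ Q)) ≤
      1 / (2 * c ^ 2) * (32 * tailRatio c ^ 3) := by
  have hr := tailRatio_pos hc
  have hexp : tailRatio c ≤ Real.exp (-4⁻¹) := by
    linarith [tailRatio_lt_one_third (by linarith : -1 < c), Real.one_sub_le_exp_neg 4⁻¹]
  have hrpow : Q * tailRatio c ^ (Q - 1) ≤ 4 * tailRatio c ^ 3 := by
    have := mul_rpow_sub_one_le four_pos hQ hr hexp
    rwa [show (4 : ℝ) - 1 = (3 : ℕ) by norm_num, Real.rpow_natCast] at this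
  have hden : c ^ 2 * 1 ≤ (1 + c) ^ 2 * (1 + 3 * tailRatio c ^ Q) := by
    gcongr
    · linarith
    · linarith [Real.rpow_pos_of_pos hr Q]
  calc _ ≤ 4 * (4 * tailRatio c ^ 3) / (c ^ 2 * 1) := by gcongr
    _ = _ := by ring

lemma tailRatio_pow_three_lt (hc : 3 < c) :
    32 * tailRatio c ^ 3 <
      ((c - 3) / (1 + c)) ^ 2 - 3 / (1 + c) + 3 * ((c + 3) / (7 * c + 3)) := by
  obtain ⟨h, rfl⟩ : ∃ h, c = 3 + h := ⟨c - 3, by ring⟩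
  have hh : 0 < h := by linarith
  rw [← sub_pos]
  have hdiff : ((3 + h - 3) / (1 + (3 + h))) ^ 2 - 3 / (1 + (3 + h))
      + 3 * ((3 + h + 3) / (7 * (3 + h) + 3)) - 32 * tailRatio (3 + h) ^ 3 =
      h * (46 * h ^ 3 + 1527 * h ^ 2 + 5832 * h + 3888) /
        (27 * (4 + h) ^ 3 * (7 * h + 24)) := by
    unfold tailRatio
    field_simp
    ring
  rw [hdiff]
  positivity

end LogDerivatives

section LogOPT

variable {s c : ℝ}

/-- The logarithm of `OPT(1, B(1/c), c, s)` for `3 ≤ c`, split into the three terms whose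
derivatives are estimated separately. -/
noncomputable def logOPT (s c : ℝ) : ℝ :=
  Real.log (3 + qRatio s (optB (Qf s) (1 / c)))
    + Qf s * (Real.log (1 + c) - Real.log (optB (Qf s) (1 / c) + c))
    + Real.log (1 + 3 * tailRatio c ^ Qf s)

lemma rpow_add_three_mul_abs_rpow (Q : ℝ) (hc : 3 ≤ c) :
    (1 + c) ^ Q + 3 * |1 - c / 3| ^ Q = (1 + c) ^ Q * (1 + 3 * tailRatio c ^ Q) := by
  have hc₁ : 0 < 1 + c := by linarith
  have habs : |1 - c / 3| = (1 + c) * tailRatio c := by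
    rw [abs_of_nonpos (by linarith), tailRatio]
    field_simp
    ring
  rw [habs, Real.mul_rpow hc₁.le (tailRatio_nonneg hc)]
  ring

lemma OPTL_eq_exp_logOPT (hs : s ≠ 0) (hQ : 1 / 2 < Qf s) (hc : 3 ≤ c) :
    OPTL 1 (optB (Qf s) (1 / c)) c s = Real.exp (logOPT s c) := by
  have hc₀ : 0 < c := by linarith
  have hB := optB_pos hQ hc₀
  have hv := qRatio_pos hs hB.ne'
  have hr := tailRatio_nonneg hc
  have hrpow (x : ℝ) (hx : 0 < x) : x ^ Qf s = Real.exp (Qf s * Real.log x) := by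
    rw [Real.rpow_def_of_pos hx, mul_comm]
  rw [OPTL, rpow_add_three_mul_abs_rpow _ hc, logOPT, Real.exp_add, Real.exp_add, mul_sub,
    Real.exp_sub, Real.exp_log (by positivity), Real.exp_log (by positivity),
    ← hrpow _ (by positivity), ← hrpow _ (by positivity), mul_one, one_mul,
    mul_div_cancel_right₀ _ (q_pos hs).ne', one_div (_ + _), Real.inv_rpow (by positivity), qRatio]
  ring

lemma hasDerivAt_logOPT (hs : 0 < s) (hQ : 1 ≤ Qf s) (hc : 3 ≤ c) :
    HasDerivAt (logOPT s)
      (-(3 / (2 * c ^ 2)) * (expRatio s (optB (Qf s) (1 / c)) /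
          (3 + qRatio s (optB (Qf s) (1 / c))))
        + -((c - 3) ^ 2 - 12) / (2 * c ^ 2 * (1 + c) * (optB (Qf s) (1 / c) + c))
        + 4 * (Qf s * tailRatio c ^ (Qf s - 1)) /
          ((1 + c) ^ 2 * (1 + 3 * tailRatio c ^ Qf s))) c := by
  have hQ' : 1 / 2 < Qf s := by linarith
  have hc₀ : 0 < c := by linarith
  exact ((hasDerivAt_log_three_add_qRatio hs hQ' hc₀).add
    (hasDerivAt_mul_log_sub_log hQ' hc₀)).add (hasDerivAt_log_one_add_tailRatio_rpow hQ hc)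

lemma deriv_logOPT_neg (hs : 0 < s) (hQ : 4 ≤ Qf s) (hc : 3 < c) :
    deriv (logOPT s) c < 0 := by
  have hQ' : 1 / 2 < Qf s := by linarith
  have hscale : 0 < 1 / (2 * c ^ 2) := by positivity
  rw [(hasDerivAt_logOPT hs (by linarith) hc.le).deriv]
  calc _ ≤ -(3 / (2 * c ^ 2)) * ((c + 3) / (7 * c + 3))
        + 1 / (2 * c ^ 2) * (3 / (1 + c) - ((c - 3) / (1 + c)) ^ 2)
        + 1 / (2 * c ^ 2) * (32 * tailRatio c ^ 3) := by
        refine add_le_add (add_le_add ?_ (neg_sq_sub_div_le hQ' hc.le))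
          (tailRatio_logDeriv_le hQ hc)
        exact mul_le_mul_of_nonpos_left (le_expRatio_div_three_add_qRatio hs hQ' hc.le)
          (neg_nonpos.2 (by positivity))
    _ = 1 / (2 * c ^ 2) * (32 * tailRatio c ^ 3 -
        (((c - 3) / (1 + c)) ^ 2 - 3 / (1 + c) + 3 * ((c + 3) / (7 * c + 3)))) := by ring
    _ < 0 := mul_neg_of_pos_of_neg hscale (sub_neg.2 (tailRatio_pow_three_lt hc))

lemma strictAntiOn_logOPT (hs : 0 < s) (hQ : 4 ≤ Qf s) :
    StrictAntiOn (logOPT s) (Set.Ici 3) := by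
  refine strictAntiOn_of_deriv_neg (convex_Ici 3) (fun c hc ↦ ?_) fun c hc ↦ ?_
  · exact (hasDerivAt_logOPT hs (by linarith) hc).continuousAt.continuousWithinAt
  · rw [interior_Ici] at hc
    exact deriv_logOPT_neg hs hQ hc

end LogOPT

theorem stmt19_general {s : ℝ} (hs : 0 < s) (hQ : 4 ≤ Qf s) :
    StrictAntiOn (fun c => OPTL 1 (optB (Qf s) (1 / c)) c s) (Set.Ici (3 : ℝ)) :=
  (Real.exp_strictMono.comp_strictAntiOn (strictAntiOn_logOPT hs hQ)).congr
    fun _ hc ↦ (OPTL_eq_exp_logOPT hs.ne' (by linarith) hc).symm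

theorem stmt19 (s : ℝ) (hs : 5 ≤ s) :
    StrictAntiOn (fun c => OPTL 1 (1 + 3*(1/c)/(2*Qf s) - 1/(2*Qf s)) c s)
      (Set.Ici (3:ℝ)) :=
  have hs₀ : 0 < s := by linarith
  stmt19_general hs₀ (by linarith [lt_Qf hs₀])
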